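/- arXiv:cs/9809023 — 2 statements merged into one kernel-verified Lean document; each statement's English description precedes it below -/
import Mathlib

section
/- Let k be a positive integer, let a : Fin k → ℝ with a i ≠ 0 for every i, and let b : Fin k → ℂ. Define T : (Fin k → ℂ) → (Fin k → ℂ) by (T z) i = (a i : ℂ) * z i + b i. Then T is injective, and for all real bound vectors l, u, l', u' : Fin k → ℝ, the image under T of the set {z | ∀ i, l i ≤ (z i).re ∧ (z i).re ≤ u i ∧ l' i ≤ (z i).im ∧ (z i).im ≤ u' i} is again a set of this form, i.e., there exist L, U, L', U' : Fin k → ℝ with T '' {z | ∀ i, l i ≤ (z i).re ≤ u i ∧ l' i ≤ (z i).im ≤ u' i} = {w | ∀ i, L i ≤ (w i).re ≤ U i ∧ L' i ≤ (w i).im ≤ U' i}; consequently z lies in the rectangle if and only if T z lies in the image rectangle. (Indeed, (T z) i has real part a i * (z i).re + (b i).re and imaginary part a i * (z i).im + (b i).im.) -/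
/-!
Since each `a i` is real, `T` acts on the real and on the imaginary part of every coordinate
separately, by a nonconstant affine map of `ℝ`. Such a map carries membership in a closed interval
to membership in a closed interval (`exists_bounds_affine`), and applying this to all `2k` real
coordinates gives the pointwise equivalence. As `T` is a bijection, the equality of the image with
the target rectangle follows from that equivalence.
-/

/-- Membership in a closed interval, possibly empty, is transported by a nonconstant affine map. -/
lemma exists_bounds_affine (a c l u : ℝ) (ha : a ≠ 0) :
    ∃ L U : ℝ, ∀ x : ℝ, (l ≤ x ∧ x ≤ u) ↔ (L ≤ a * x + c ∧ a * x + c ≤ U) := by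
  -- A negative slope exchanges the endpoints; sorting the two images by `min` and `max` instead
  -- would turn an empty interval (`u < l`) into a nonempty one.
  rcases lt_or_gt_of_ne ha with h | h
  · refine ⟨a * u + c, a * l + c, fun x => ?_⟩
    rw [add_le_add_iff_right, add_le_add_iff_right, mul_le_mul_left_of_neg h,
      mul_le_mul_left_of_neg h, and_comm]
  · refine ⟨a * l + c, a * u + c, fun x => ?_⟩
    rw [add_le_add_iff_right, add_le_add_iff_right, mul_le_mul_iff_right₀ h,
      mul_le_mul_iff_right₀ h]

theorem safe_complex_rect_transformation
    (k : ℕ) (hk : 0 < k) (a : Fin k → ℝ) (ha : ∀ i, a i ≠ 0) (b : Fin k → ℂ)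
    (T : (Fin k → ℂ) → (Fin k → ℂ))
    (hT : ∀ z i, T z i = (a i : ℂ) * z i + b i) :
    Function.Injective T ∧
    ∀ l u l' u' : Fin k → ℝ,
      ∃ L U L' U' : Fin k → ℝ,
        T '' {z | ∀ i, l i ≤ (z i).re ∧ (z i).re ≤ u i ∧
                        l' i ≤ (z i).im ∧ (z i).im ≤ u' i}
          = {w | ∀ i, L i ≤ (w i).re ∧ (w i).re ≤ U i ∧
                        L' i ≤ (w i).im ∧ (w i).im ≤ U' i} ∧
        ∀ z : Fin k → ℂ,
          ((∀ i, l i ≤ (z i).re ∧ (z i).re ≤ u i ∧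
                  l' i ≤ (z i).im ∧ (z i).im ≤ u' i) ↔
           (∀ i, L i ≤ (T z i).re ∧ (T z i).re ≤ U i ∧
                  L' i ≤ (T z i).im ∧ (T z i).im ≤ U' i)) := by
  have hc : ∀ i, (a i : ℂ) ≠ 0 := fun i => Complex.ofReal_ne_zero.mpr (ha i)
  have hinj : Function.Injective T := by
    intro z w h
    funext i
    have hi := congrFun h i
    rw [hT, hT] at hi
    exact mul_left_cancel₀ (hc i) (add_right_cancel hi)
  have hsurj : Function.Surjective T := by
    intro w
    refine ⟨fun i => (w i - b i) / (a i : ℂ), ?_⟩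
    funext i
    rw [hT, mul_div_cancel₀ _ (hc i), sub_add_cancel]
  have hre : ∀ z i, (T z i).re = a i * (z i).re + (b i).re := by
    intro z i
    rw [hT, Complex.add_re, Complex.re_ofReal_mul]
  have him : ∀ z i, (T z i).im = a i * (z i).im + (b i).im := by
    intro z i
    rw [hT, Complex.add_im, Complex.im_ofReal_mul]
  refine ⟨hinj, fun l u l' u' => ?_⟩
  choose L U hLU using fun i => exists_bounds_affine (a i) (b i).re (l i) (u i) (ha i)
  choose L' U' hLU' using fun i => exists_bounds_affine (a i) (b i).im (l' i) (u' i) (ha i)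
  have key : ∀ z : Fin k → ℂ,
      ((∀ i, l i ≤ (z i).re ∧ (z i).re ≤ u i ∧ l' i ≤ (z i).im ∧ (z i).im ≤ u' i) ↔
       (∀ i, L i ≤ (T z i).re ∧ (T z i).re ≤ U i ∧
              L' i ≤ (T z i).im ∧ (T z i).im ≤ U' i)) := by
    intro z
    refine forall_congr' fun i => ?_
    rw [hre, him, ← and_assoc, ← and_assoc (a := L i ≤ _), hLU i, hLU' i]
  refine ⟨L, U, L', U', ?_, key⟩
  ext w
  obtain ⟨z, rfl⟩ := hsurj w
  rw [hinj.mem_set_image]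
  exact key z
end

section
/- Time warping (stretching the time dimension by a factor m) in the frequency domain: let n and m be positive integers, s : Fin n → ℂ, and define the stretched sequence s' : Fin (m*n) → ℂ by s' j = s ⌊j / m⌋ (so each value of s is repeated m consecutive times). Define S f = (1/√n) · ∑_{t=0}^{n-1} s t · exp(-2πi·t·f/n) and S' f = (1/√n) · ∑_{t=0}^{m·n-1} s' t · exp(-2πi·t·f/(m·n)). Then for every f with 0 ≤ f < n, S' f = a f * S f, where a f = ∑_{t=0}^{m-1} exp(-2πi·t·f/(m·n)). -/
/-!
Every index of the stretched sequence is uniquely `m * q + r` with `q < n` and `r < m`, and `s'`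
takes the value `s q` there. Since
`exp (-2πi (m q + r) f / (m n)) = exp (-2πi r f / (m n)) * exp (-2πi q f / n)`, the sum defining
`S' f` is the product of the sum over `r`, which is `a f`, and the sum over `q`, which is `S f` up
to the factor `1 / √n`.
-/

open Complex Real Finset

theorem dft_time_warping (n m : ℕ) (hn : 0 < n) (hm : 0 < m)
    (s : Fin n → ℂ) (s' : Fin (m * n) → ℂ)
    (hs' : ∀ j : Fin (m * n),
      s' j = s ⟨(j : ℕ) / m,
        Nat.div_lt_of_lt_mul j.isLt⟩)
    (S : Fin n → ℂ) (S' : Fin (m * n) → ℂ) (a : Fin n → ℂ)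
    (hS : ∀ f : Fin n, S f = (1 / Real.sqrt n : ℝ) *
      ∑ t : Fin n, s t * Complex.exp (-2 * Real.pi * Complex.I * t * f / n))
    (hS' : ∀ f : Fin (m * n), S' f = (1 / Real.sqrt n : ℝ) *
      ∑ t : Fin (m * n), s' t * Complex.exp (-2 * Real.pi * Complex.I * t * f / (m * n)))
    (ha : ∀ f : Fin n, a f =
      ∑ t ∈ Finset.range m, Complex.exp (-2 * Real.pi * Complex.I * t * f / (m * n))) :
    ∀ f : Fin n, S' (Fin.castLE (Nat.le_mul_of_pos_left n hm) f) = a f * S f := by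
  intro f
  have hn' : (n : ℂ) ≠ 0 := by exact_mod_cast hn.ne'
  have hm' : (m : ℂ) ≠ 0 := by exact_mod_cast hm.ne'
  -- `finProdFinEquiv` sends `(q, r)` to `r + m * q`.
  let e : Fin n × Fin m ≃ Fin (m * n) := finProdFinEquiv.trans (finCongr (mul_comm n m))
  have he (q : Fin n) (r : Fin m) : (e (q, r) : ℕ) = r + m * q := by
    simp [e, finProdFinEquiv]
  have hse (q : Fin n) (r : Fin m) : s' (e (q, r)) = s q := by
    rw [hs']
    congr 1
    ext
    simp only [he]
    rw [Nat.add_mul_div_left _ _ hm, Nat.div_eq_of_lt r.isLt, zero_add]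
  rw [hS', hS, ha, mul_left_comm, ← e.sum_comp, Fintype.sum_prod_type, Finset.sum_comm,
    ← Fin.sum_univ_eq_sum_range
      (fun t : ℕ => Complex.exp (-2 * Real.pi * Complex.I * t * f / (m * n))),
    Finset.sum_mul_sum]
  congr 1
  refine Finset.sum_congr rfl fun r _ => Finset.sum_congr rfl fun q _ => ?_
  rw [hse, he, mul_left_comm, ← Complex.exp_add]
  congr 2
  push_cast [Fin.val_castLE]
  field_simp
  ring
end
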